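/- Let H be a Hopf algebra over K and (V, μ) an algebra in the category of left H-Yetter-Drinfeld modules. Then the map P_R : V # H → V # H defined by P_R(v # h) = ε(h) (v # 1_H) is an idempotent Rota-Baxter operator of weight -1 on the smash product algebra V # H. -/

import Mathlib

/-!
STATEMENT 12: For an algebra `(V, μ)` in the category of left `H`-Yetter-Drinfeld modules,
the map `P_R(v # h) = ε(h)(v # 1)` is an idempotent Rota-Baxter operator of weight `-1`
on the smash product algebra `V # H`.
-/

open TensorProduct Coalgebra HopfAlgebra LinearMap

/-- The smash product multiplication on `V ⊗ H` associated to a left `H`-action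
`act : H ⊗ V →ₗ V`:  `(v # h)(v' # h') = ∑ v(h₍₁₎·v') # h₍₂₎h'`. -/
noncomputable def smashMul (K : Type*) [Field K]
    (H : Type*) [Ring H] [HopfAlgebra K H]
    (V : Type*) [NonUnitalRing V] [Module K V]
    [SMulCommClass K V V] [IsScalarTower K V V]
    (act : H ⊗[K] V →ₗ[K] V) :
    (V ⊗[K] H) ⊗[K] (V ⊗[K] H) →ₗ[K] V ⊗[K] H :=
  (LinearMap.rTensor H (LinearMap.mul' K V)) ∘ₗ
  (TensorProduct.assoc K V V H).symm.toLinearMap ∘ₗ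
  (LinearMap.lTensor V (TensorProduct.map act (LinearMap.mul' K H))) ∘ₗ
  (LinearMap.lTensor V (TensorProduct.tensorTensorTensorComm K H H V H).toLinearMap) ∘ₗ
  (TensorProduct.assoc K V (H ⊗[K] H) (V ⊗[K] H)).toLinearMap ∘ₗ
  (LinearMap.rTensor (V ⊗[K] H) (LinearMap.lTensor V (Coalgebra.comul (R := K) (A := H))))

/-!
With `H⁺ = ker ε`, the smash product is the direct sum of `V # 1` and `V # H⁺`, and `P_R` is the
projection onto the first summand along the second. Both summands are closed under multiplication,
the second because `ε` is multiplicative. Any projection `P` onto a subalgebra along a complementary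
subalgebra is a Rota-Baxter operator of weight `-1`: apply `P` to the product
`(x - P x)(y - P y)`, which lies in `ker P`.
-/

section RotaBaxter

variable {R A : Type*}

/-- `P` is a Rota-Baxter operator of weight `c` for the multiplication `m` on `A`. The
multiplication is a linear map on `A ⊗ A`, so that the notion applies to smash products without
putting a second ring structure on the tensor product. -/
def IsRotaBaxter [CommSemiring R] [AddCommMonoid A] [Module R A]
    (m : A ⊗[R] A →ₗ[R] A) (c : R) (P : A →ₗ[R] A) : Prop :=
  ∀ x y : A, m (P x ⊗ₜ[R] P y) =
    P (m (x ⊗ₜ[R] P y)) + P (m (P x ⊗ₜ[R] y)) + c • P (m (x ⊗ₜ[R] y))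

theorem isRotaBaxter_neg_one_of_isIdempotentElem [CommRing R] [AddCommGroup A] [Module R A]
    {m : A ⊗[R] A →ₗ[R] A} {P : A →ₗ[R] A} (hP : IsIdempotentElem P)
    (hrange : ∀ x ∈ range P, ∀ y ∈ range P, m (x ⊗ₜ[R] y) ∈ range P)
    (hker : ∀ x ∈ ker P, ∀ y ∈ ker P, m (x ⊗ₜ[R] y) ∈ ker P) :
    IsRotaBaxter m (-1) P := by
  intro x y
  have sub_mem_ker (z : A) : z - P z ∈ ker P := by
    rw [mem_ker, map_sub, ← Module.End.mul_apply, hP.eq, sub_self]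
  have map_mul_range : P (m (P x ⊗ₜ[R] P y)) = m (P x ⊗ₜ[R] P y) :=
    (LinearMap.IsIdempotentElem.mem_range_iff hP).mp (hrange _ ⟨x, rfl⟩ _ ⟨y, rfl⟩)
  have map_mul_ker : P (m ((x - P x) ⊗ₜ[R] (y - P y))) = 0 :=
    hker _ (sub_mem_ker x) _ (sub_mem_ker y)
  simp only [sub_tmul, tmul_sub, map_sub, map_mul_range] at map_mul_ker
  rw [neg_one_smul, ← sub_eq_zero, ← map_mul_ker]
  abel

end RotaBaxter

section CounitProj

variable (R H V : Type*) [CommSemiring R] [Semiring H] [Bialgebra R H] [AddCommMonoid V]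
  [Module R V]

/-- The map `v # h ↦ ε(h) (v # 1)` on `V ⊗ H`, written `P_R` in the paper. -/
noncomputable def counitProj : V ⊗[R] H →ₗ[R] V ⊗[R] H :=
  lTensor V (Algebra.linearMap R H ∘ₗ counit)

variable {R H V}

@[simp]
theorem counitProj_tmul (v : V) (h : H) :
    counitProj R H V (v ⊗ₜ[R] h) = counit (R := R) h • (v ⊗ₜ[R] (1 : H)) := by
  simp [counitProj, Algebra.algebraMap_eq_smul_one]

theorem isIdempotentElem_counitProj : IsIdempotentElem (counitProj R H V) :=
  TensorProduct.ext' fun v h => by simp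

theorem mem_range_counitProj {x : V ⊗[R] H} :
    x ∈ range (counitProj R H V) ↔ ∃ v : V, v ⊗ₜ[R] (1 : H) = x := by
  constructor
  · rintro ⟨y, rfl⟩
    induction y with
    | zero => exact ⟨0, by simp⟩
    | tmul v h => exact ⟨counit (R := R) h • v, by simp [smul_tmul']⟩
    | add y z hy hz =>
      obtain ⟨v, hv⟩ := hy
      obtain ⟨w, hw⟩ := hz
      exact ⟨v + w, by rw [add_tmul, hv, hw, map_add]⟩
  · rintro ⟨v, rfl⟩
    exact ⟨v ⊗ₜ[R] (1 : H), by simp⟩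

end CounitProj

section SmashProduct

variable {R H V : Type*}

section Semiring

variable [CommSemiring R] [Semiring H] [Bialgebra R H] [NonUnitalNonAssocSemiring V] [Module R V]
  [SMulCommClass R V V] [IsScalarTower R V V]

/-- The smash product multiplication `(v # h)(v' # h') = ∑ v(h₍₁₎·v') # h₍₂₎h'` for a bialgebra
`H` over a commutative semiring; `smashMul` is the case of a Hopf algebra over a field. -/
noncomputable def bialgebraSmashMul (act : H ⊗[R] V →ₗ[R] V) :
    (V ⊗[R] H) ⊗[R] (V ⊗[R] H) →ₗ[R] V ⊗[R] H :=
  rTensor H (mul' R V) ∘ₗ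
  (TensorProduct.assoc R V V H).symm.toLinearMap ∘ₗ
  lTensor V (TensorProduct.map act (mul' R H) ∘ₗ
    (TensorProduct.tensorTensorTensorComm R H H V H).toLinearMap ∘ₗ
    rTensor (V ⊗[R] H) comul) ∘ₗ
  (TensorProduct.assoc R V H (V ⊗[R] H)).toLinearMap

variable (act : H ⊗[R] V →ₗ[R] V)

theorem bialgebraSmashMul_tmul_tmul (v w : V) (h g : H) {ι : Type*} (r : Coalgebra.Repr R h ι) :
    bialgebraSmashMul act ((v ⊗ₜ[R] h) ⊗ₜ[R] (w ⊗ₜ[R] g)) =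
      ∑ i ∈ r.index, (v * act (r.left i ⊗ₜ[R] w)) ⊗ₜ[R] (r.right i * g) := by
  simp [bialgebraSmashMul, ← r.eq, sum_tmul, tmul_sum]

theorem bialgebraSmashMul_tmul_one_tmul (v w : V) (g : H) :
    bialgebraSmashMul act ((v ⊗ₜ[R] (1 : H)) ⊗ₜ[R] (w ⊗ₜ[R] g)) =
      (v * act ((1 : H) ⊗ₜ[R] w)) ⊗ₜ[R] g := by
  simp [bialgebraSmashMul, Algebra.TensorProduct.one_def]

theorem bialgebraSmashMul_mem_range_counitProj {x y : V ⊗[R] H}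
    (hx : x ∈ range (counitProj R H V)) (hy : y ∈ range (counitProj R H V)) :
    bialgebraSmashMul act (x ⊗ₜ[R] y) ∈ range (counitProj R H V) := by
  obtain ⟨v, rfl⟩ := mem_range_counitProj.mp hx
  obtain ⟨w, rfl⟩ := mem_range_counitProj.mp hy
  exact mem_range_counitProj.mpr ⟨_, (bialgebraSmashMul_tmul_one_tmul act v w 1).symm⟩

theorem counitProj_bialgebraSmashMul_counitProj_right (x y : V ⊗[R] H) :
    counitProj R H V (bialgebraSmashMul act (x ⊗ₜ[R] counitProj R H V y)) =
      counitProj R H V (bialgebraSmashMul act (x ⊗ₜ[R] y)) := by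
  induction x with
  | zero => simp
  | add a b ha hb => simp only [add_tmul, map_add, ha, hb]
  | tmul v h =>
    induction y with
    | zero => simp
    | add a b ha hb => simp only [tmul_add, map_add, ha, hb]
    | tmul w g =>
      simp [bialgebraSmashMul_tmul_tmul act v w h _ (Coalgebra.Repr.arbitrary R h),
        Finset.smul_sum, smul_smul, mul_comm]

theorem bialgebraSmashMul_mem_ker_counitProj (x : V ⊗[R] H) {y : V ⊗[R] H}
    (hy : y ∈ ker (counitProj R H V)) :
    bialgebraSmashMul act (x ⊗ₜ[R] y) ∈ ker (counitProj R H V) := by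
  rw [mem_ker, ← counitProj_bialgebraSmashMul_counitProj_right, mem_ker.mp hy, tmul_zero, map_zero,
    map_zero]

end Semiring

theorem smashProduct_PR_isRotaBaxter_weight_neg_one_general [CommRing R] [Semiring H]
    [Bialgebra R H] [NonUnitalNonAssocRing V] [Module R V] [SMulCommClass R V V]
    [IsScalarTower R V V] (act : H ⊗[R] V →ₗ[R] V) :
    IsIdempotentElem (counitProj R H V) ∧
      IsRotaBaxter (bialgebraSmashMul act) (-1) (counitProj R H V) :=
  ⟨isIdempotentElem_counitProj,
    isRotaBaxter_neg_one_of_isIdempotentElem isIdempotentElem_counitProj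
      (fun _ hx _ hy => bialgebraSmashMul_mem_range_counitProj act hx hy)
      (fun x _ _ hy => bialgebraSmashMul_mem_ker_counitProj act x hy)⟩

theorem smashMul_eq_bialgebraSmashMul [Field R] [Ring H] [HopfAlgebra R H] [NonUnitalRing V]
    [Module R V] [SMulCommClass R V V] [IsScalarTower R V V] (act : H ⊗[R] V →ₗ[R] V) :
    smashMul R H V act = bialgebraSmashMul act :=
  TensorProduct.ext_fourfold' fun v h w g => by simp [smashMul, bialgebraSmashMul]

end SmashProduct

theorem smashProduct_PR_isRotaBaxter_weight_neg_one
    (K : Type*) [Field K] [CharZero K]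
    (H : Type*) [Ring H] [HopfAlgebra K H]
    (V : Type*) [NonUnitalRing V] [Module K V]
    [SMulCommClass K V V] [IsScalarTower K V V]
    -- left H-module structure on V
    (act : H ⊗[K] V →ₗ[K] V)
    (act_one : ∀ v : V, act ((1 : H) ⊗ₜ[K] v) = v)
    (act_mul : ∀ (h h' : H) (v : V),
      act (h ⊗ₜ[K] act (h' ⊗ₜ[K] v)) = act ((h * h') ⊗ₜ[K] v))
    -- left H-comodule structure on V
    (ρ : V →ₗ[K] H ⊗[K] V)
    (coassoc : ∀ v : V,
      (ρ.lTensor H) (ρ v) =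
        (TensorProduct.assoc K H H V)
          (((Coalgebra.comul (R := K) (A := H)).rTensor V) (ρ v)))
    (counital : ∀ v : V,
      (TensorProduct.lid K V) (((Coalgebra.counit (R := K) (A := H)).rTensor V) (ρ v)) = v)
    -- Yetter-Drinfeld condition:
    -- ∑ h₍₁₎v₍₋₁₎ ⊗ h₍₂₎·v₍₀₎ = ∑ (h₍₁₎·v)₍₋₁₎h₍₂₎ ⊗ (h₍₁₎·v)₍₀₎
    (yd : ∀ (h : H) (v : V),
      (TensorProduct.map (LinearMap.mul' K H) act)
        ((TensorProduct.tensorTensorTensorComm K H H H V)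
          (Coalgebra.comul h ⊗ₜ[K] ρ v)) =
      (TensorProduct.map
          ((LinearMap.mul' K H) ∘ₗ (TensorProduct.comm K H H).toLinearMap) LinearMap.id)
        ((TensorProduct.assoc K H H V).symm
          ((LinearMap.lTensor H (ρ ∘ₗ act))
            ((TensorProduct.assoc K H H V)
              ((LinearMap.rTensor V (TensorProduct.comm K H H).toLinearMap)
                (Coalgebra.comul h ⊗ₜ[K] v))))))
    -- module-algebra condition: h·(vv') = ∑ (h₍₁₎·v)(h₍₂₎·v')
    (act_alg : ∀ (h : H) (v v' : V),
      act (h ⊗ₜ[K] (v * v')) =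
        (LinearMap.mul' K V)
          ((TensorProduct.map act act)
            ((TensorProduct.tensorTensorTensorComm K H H V V)
              (Coalgebra.comul h ⊗ₜ[K] (v ⊗ₜ[K] v')))))
    -- comodule-algebra condition: ρ(vv') = ∑ v₍₋₁₎v'₍₋₁₎ ⊗ v₍₀₎v'₍₀₎
    (coact_alg : ∀ v v' : V,
      ρ (v * v') =
        (TensorProduct.map (LinearMap.mul' K H) (LinearMap.mul' K V))
          ((TensorProduct.tensorTensorTensorComm K H V H V) (ρ v ⊗ₜ[K] ρ v')))
    :
    -- P_R(v # h) = ε(h)(v # 1)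
    let PR : V ⊗[K] H →ₗ[K] V ⊗[K] H :=
      LinearMap.lTensor V
        ((Algebra.linearMap K H) ∘ₗ (Coalgebra.counit (R := K) (A := H)))
    (PR ∘ₗ PR = PR) ∧
    (∀ x y : V ⊗[K] H,
      smashMul K H V act (PR x ⊗ₜ[K] PR y) =
        PR (smashMul K H V act (x ⊗ₜ[K] PR y)) +
        PR (smashMul K H V act (PR x ⊗ₜ[K] y)) +
        (-1 : K) • PR (smashMul K H V act (x ⊗ₜ[K] y))) := by
  rw [smashMul_eq_bialgebraSmashMul]
  exact smashProduct_PR_isRotaBaxter_weight_neg_one_general act
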